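/- Let δ > 0 and ε > 0 be real numbers, let X be a geodesic metric space with δ-slim triangles, and let h be an isometry of X. Suppose A : ℝ → X is an isometric embedding (a geodesic line) which is translated by h, i.e. there is a real number ℓ ≥ ε with h(A(t)) = A(t + ℓ) for all t ∈ ℝ. Set m = ⌈2δ/ε⌉. Then for every point x ∈ X, writing L = dist(x, A(ℝ)) for the distance from x to the image of A, if L ≥ 3δ then d(x, h^m·x) ≥ 2L − 6δ. -/

import Mathlib

/-!
Let the isometry `g` translate the line `A` by `D ≥ 4δ`. Then every geodesic `[x, g x]` comes
`2δ`-close to the line. Suppose not, let `A a` be an almost nearest point to `x`, and look at the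
triangle with vertices `x` and `A (a ± D)`. If `[x, A (a + D)]` passes `δ`-close to `A b`, then
slimness of the triangle `x, g x, A (a + D)` makes `[g x, A (a + D)]` pass `2δ`-close to `A b`.
Since that side has the same length as `[x, A a]`, the parameter `b` cannot lie noticeably to the
left of `a`. In the same way, if `[x, A (a - D)]` passes `δ`-close to `A b`, then `b` cannot lie
noticeably to the right of `a`, and `A (b + D)` is almost as close to `x` as `A a` is. So a point
just to the right of `A a` is near `[x, A (a + D)]`, which makes this side long, and a point just to
the left is near `[x, A (a - D)]`, which makes `d(x, A (a + D))` small: a contradiction.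

If `g` only translates by `D ≥ 2δ`, apply this to `g²`: slimness of the triangle `x, g x, g² x`
provides a point of `[x, g x] ∪ g [x, g x]`, hence one of `[x, g x]`, that is `3δ`-close to the
line. The detour from `x` to `g x` through the line then costs at most `6δ`.
-/

open Metric Filter

/-- `f` parametrizes a geodesic segment from `x` to `y` by arc length on `[0, dist x y]`. -/
def IsGeodesicSegment {X : Type*} [MetricSpace X] (f : ℝ → X) (x y : X) : Prop :=
  f 0 = x ∧ f (dist x y) = y ∧
    ∀ s ∈ Set.Icc (0 : ℝ) (dist x y), ∀ t ∈ Set.Icc (0 : ℝ) (dist x y),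
      dist (f s) (f t) = |s - t|

/-- `σ` is (the image of) a geodesic segment joining `x` to `y`. -/
def IsGeodesic {X : Type*} [MetricSpace X] (σ : Set X) (x y : X) : Prop :=
  ∃ f : ℝ → X, IsGeodesicSegment f x y ∧ σ = f '' Set.Icc 0 (dist x y)

/-- `X` is a geodesic metric space: any two points are joined by a geodesic segment. -/
def GeodesicSpace (X : Type*) [MetricSpace X] : Prop :=
  ∀ x y : X, ∃ σ : Set X, IsGeodesic σ x y

/-- Triangles in `X` are δ-slim: each side lies in the closed δ-neighborhood of the
union of the other two sides. -/
def SlimTriangles (X : Type*) [MetricSpace X] (δ : ℝ) : Prop :=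
  ∀ x y z : X, ∀ s₁ s₂ s₃ : Set X,
    IsGeodesic s₁ x y → IsGeodesic s₂ y z → IsGeodesic s₃ z x →
    ∀ p ∈ s₁, ∃ q ∈ s₂ ∪ s₃, dist p q ≤ δ

section Geodesics

variable {X Y : Type*} [MetricSpace X] [MetricSpace Y] {σ : Set X} {x y p q : X}

theorem IsGeodesic.symm (hσ : IsGeodesic σ x y) : IsGeodesic σ y x := by
  obtain ⟨f, ⟨hf₀, hf₁, hf⟩, rfl⟩ := hσ
  unfold IsGeodesic IsGeodesicSegment
  rw [dist_comm y x]
  have reflect_mem : ∀ s ∈ Set.Icc 0 (dist x y), dist x y - s ∈ Set.Icc 0 (dist x y) :=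
    fun s hs => ⟨sub_nonneg.2 hs.2, sub_le_self _ hs.1⟩
  refine ⟨fun s => f (dist x y - s), ⟨by simpa using hf₁, by simpa using hf₀, ?_⟩, ?_⟩
  · intro s hs t ht
    rw [hf _ (reflect_mem s hs) _ (reflect_mem t ht), sub_sub_sub_cancel_left, abs_sub_comm]
  · rw [← Set.image_image f (dist x y - ·), Set.image_const_sub_Icc, sub_self, sub_zero]

theorem IsGeodesic.image (hσ : IsGeodesic σ x y) {g : X → Y} (hg : Isometry g) :
    IsGeodesic (g '' σ) (g x) (g y) := by
  obtain ⟨f, ⟨hf₀, hf₁, hf⟩, rfl⟩ := hσ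
  unfold IsGeodesic IsGeodesicSegment
  rw [hg.dist_eq]
  refine ⟨g ∘ f, ⟨congrArg g hf₀, congrArg g hf₁, fun s hs t ht => ?_⟩, (Set.image_comp g f _).symm⟩
  exact (hg.dist_eq _ _).trans (hf s hs t ht)

theorem isGeodesic_Icc {a b : ℝ} (hab : a ≤ b) : IsGeodesic (Set.Icc a b) a b := by
  have hdist : dist a b = b - a := by rw [dist_comm, Real.dist_eq, abs_of_nonneg (sub_nonneg.2 hab)]
  unfold IsGeodesic IsGeodesicSegment
  rw [hdist]
  refine ⟨fun s => a + s, ⟨add_zero a, add_sub_cancel a b, fun s _ t _ => ?_⟩, ?_⟩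
  · rw [dist_add_left, Real.dist_eq]
  · rw [Set.image_const_add_Icc, add_zero, add_sub_cancel]

theorem IsGeodesic.dist_add_dist_of_mem (hσ : IsGeodesic σ x y) (hq : q ∈ σ) :
    dist x q + dist q y = dist x y := by
  obtain ⟨f, ⟨hf₀, hf₁, hf⟩, rfl⟩ := hσ
  obtain ⟨s, hs, rfl⟩ := hq
  have hxs := hf 0 ⟨le_rfl, dist_nonneg⟩ s hs
  have hsy := hf s hs (dist x y) ⟨dist_nonneg, le_rfl⟩
  rw [hf₀, zero_sub, abs_neg, abs_of_nonneg hs.1] at hxs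
  rw [hf₁, abs_sub_comm, abs_of_nonneg (sub_nonneg.2 hs.2)] at hsy
  rw [hxs, hsy, add_sub_cancel]

theorem IsGeodesic.dist_add_dist_le_of_near {r : ℝ} (hσ : IsGeodesic σ x y) (hq : q ∈ σ)
    (hqp : dist q p ≤ r) : dist x p + dist p y ≤ dist x y + 2 * r := by
  have hxp := dist_triangle x q p
  have hpy := dist_triangle_left p y q
  linarith [hσ.dist_add_dist_of_mem hq]

end Geodesics

section Slim

variable {X : Type*} [MetricSpace X] {δ : ℝ}

theorem SlimTriangles.dist_add_dist_le_of_near_of_far (hslim : SlimTriangles X δ)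
    (hgeo : GeodesicSpace X) {u w y v p : X} {σ τ : Set X} (hσ : IsGeodesic σ u y)
    (hτ : IsGeodesic τ w u) (hv : v ∈ σ) (hvp : dist v p ≤ δ) (hfar : ∀ q ∈ τ, 2 * δ < dist q p) :
    dist w p + dist p y ≤ dist w y + 4 * δ := by
  obtain ⟨ρ, hρ⟩ := hgeo y w
  obtain ⟨q, hq, hvq⟩ := hslim u y w σ ρ τ hσ hρ hτ v hv
  have hqp : dist q p ≤ 2 * δ := by linarith [dist_triangle_left q p v]
  rcases hq with hqρ | hqτ
  · linarith [hρ.symm.dist_add_dist_le_of_near hqρ hqp]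
  · exact absurd hqp (hfar q hqτ).not_ge

end Slim

section Translation

theorem isometry_iterate {X : Type*} [PseudoEMetricSpace X] {g : X → X} (hg : Isometry g) (n : ℕ) :
    Isometry g^[n] := by
  induction n with
  | zero => exact isometry_id
  | succ n ih => exact ih.comp hg

variable {X : Type*} [MetricSpace X] {δ D : ℝ} {A : ℝ → X} {g : X → X} {x : X} {σ : Set X}

theorem dist_map_line_of_translation (hg : Isometry g) (hgA : Function.Semiconj A (· + D) g)
    (y : X) (t : ℝ) : dist (g y) (A t) = dist y (A (t - D)) := by
  have hgt : g (A (t - D)) = A t := by simpa only [sub_add_cancel] using (hgA (t - D)).symm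
  rw [← hgt, hg.dist_eq]

theorem SlimTriangles.dist_add_dist_le_of_near_forward (hslim : SlimTriangles X δ)
    (hgeo : GeodesicSpace X) (hg : Isometry g) (hgA : Function.Semiconj A (· + D) g)
    (hσ : IsGeodesic σ x (g x)) {ρ : Set X} {a b : ℝ} (hfar : ∀ q ∈ σ, 2 * δ < dist q (A b))
    (hρ : IsGeodesic ρ x (A (a + D))) {v : X} (hv : v ∈ ρ) (hvb : dist v (A b) ≤ δ) :
    dist x (A (b - D)) + dist (A b) (A (a + D)) ≤ dist x (A a) + 4 * δ := by
  have near := hslim.dist_add_dist_le_of_near_of_far hgeo hρ hσ.symm hv hvb hfar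
  rwa [dist_map_line_of_translation hg hgA, dist_map_line_of_translation hg hgA,
    add_sub_cancel_right] at near

theorem SlimTriangles.dist_add_dist_le_of_near_backward (hslim : SlimTriangles X δ)
    (hgeo : GeodesicSpace X) (hg : Isometry g) (hgA : Function.Semiconj A (· + D) g)
    (hσ : IsGeodesic σ x (g x)) {ρ : Set X} {a b : ℝ} (hfar : ∀ q ∈ σ, 2 * δ < dist q (A (b + D)))
    (hρ : IsGeodesic ρ x (A (a - D))) {v : X} (hv : v ∈ ρ) (hvb : dist v (A b) ≤ δ) :
    dist x (A (b + D)) + dist (A a) (A (b + D)) ≤ dist x (A a) + 4 * δ := by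
  have hgρ : IsGeodesic (g '' ρ) (g x) (A a) := by
    simpa only [← hgA (a - D), sub_add_cancel] using hρ.image hg
  rw [dist_comm (A a)]
  refine hslim.dist_add_dist_le_of_near_of_far hgeo hgρ hσ (Set.mem_image_of_mem g hv) ?_ hfar
  rwa [dist_map_line_of_translation hg hgA, add_sub_cancel_right]

theorem SlimTriangles.exists_mem_dist_le_two_mul_of_translation (hslim : SlimTriangles X δ)
    (hgeo : GeodesicSpace X) (hA : Isometry A) (hg : Isometry g)
    (hgA : Function.Semiconj A (· + D) g) (hD : 0 < D) (hδD : 4 * δ ≤ D)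
    (hσ : IsGeodesic σ x (g x)) : ∃ q ∈ σ, ∃ t, dist q (A t) ≤ 2 * δ := by
  by_contra! hfar
  set L := infDist x (Set.range A)
  have hL : ∀ t, L ≤ dist x (A t) := fun t => infDist_le_dist_of_mem (Set.mem_range_self t)
  have sub_le_dist : ∀ s t, t - s ≤ dist (A s) (A t) := fun s t => by
    rw [dist_comm, hA.dist_eq]
    exact le_abs_self (t - s)
  obtain ⟨_, ⟨a, rfl⟩, ha⟩ : ∃ p ∈ Set.range A, dist x p < L + D / 8 :=
    (infDist_lt_iff (Set.range_nonempty A)).1 (by linarith)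
  obtain ⟨ρ, hρ⟩ := hgeo x (A (a + D))
  obtain ⟨ρ', hρ'⟩ := hgeo x (A (a - D))
  have near_side : ∀ b ∈ Set.Icc (a - D) (a + D), ∃ v ∈ ρ ∪ ρ', dist v (A b) ≤ δ := fun b hb => by
    simpa only [dist_comm] using hslim _ _ x _ _ _
      ((isGeodesic_Icc (by linarith)).image hA) hρ.symm hρ' _ (Set.mem_image_of_mem A hb)
  have ahead : D - D / 8 + L ≤ dist x (A (a + D)) + 2 * δ := by
    obtain ⟨v, hv | hv, hvb⟩ := near_side (a + D / 8) ⟨by linarith, by linarith⟩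
    · have near := hρ.dist_add_dist_le_of_near hv hvb
      linarith [hL (a + D / 8), sub_le_dist (a + D / 8) (a + D)]
    · have near := hslim.dist_add_dist_le_of_near_backward hgeo hg hgA hσ (hfar · · _) hρ' hv hvb
      linarith [hL (a + D / 8 + D), sub_le_dist a (a + D / 8 + D)]
  have behind : dist x (A (a - D / 8 + D)) + (D - D / 8) ≤ dist x (A a) + 4 * δ := by
    obtain ⟨v, hv | hv, hvb⟩ := near_side (a - D / 8) ⟨by linarith, by linarith⟩
    · have near := hslim.dist_add_dist_le_of_near_forward hgeo hg hgA hσ (hfar · · _) hρ hv hvb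
      linarith [hL (a - D / 8 - D), sub_le_dist (a - D / 8) (a + D)]
    · have near := hslim.dist_add_dist_le_of_near_backward hgeo hg hgA hσ (hfar · · _) hρ' hv hvb
      linarith [sub_le_dist a (a - D / 8 + D)]
  have dist_shift : dist (A (a - D / 8 + D)) (A (a + D)) = D / 8 := by
    rw [hA.dist_eq, dist_comm, Real.dist_eq, abs_of_pos] <;> linarith
  -- The four errors `D / 8` add up to `D / 2 ≤ 2 * D - 6 * δ`.
  linarith [dist_triangle x (A (a - D / 8 + D)) (A (a + D))]

theorem SlimTriangles.exists_mem_dist_le_three_mul_of_translation (hslim : SlimTriangles X δ)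
    (hgeo : GeodesicSpace X) (hA : Isometry A) (hg : Isometry g)
    (hgA : Function.Semiconj A (· + D) g) (hD : 0 < D) (hδD : 2 * δ ≤ D)
    (hσ : IsGeodesic σ x (g x)) : ∃ r ∈ σ, ∃ t, dist r (A t) ≤ 3 * δ := by
  have hggA : Function.Semiconj A (· + (D + D)) (g ∘ g) := by
    simpa only [Function.comp_def, add_assoc] using hgA.comp_right hgA
  obtain ⟨τ, hτ⟩ := hgeo x (g (g x))
  obtain ⟨q, hq, t, hqt⟩ := hslim.exists_mem_dist_le_two_mul_of_translation hgeo hA (hg.comp hg)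
    hggA (by linarith) (by linarith) hτ
  obtain ⟨r, hr, hqr⟩ := hslim _ _ _ τ _ σ hτ (hσ.image hg).symm hσ.symm q hq
  have hrt : dist r (A t) ≤ 3 * δ := by linarith [dist_triangle_left r (A t) q]
  rcases hr with ⟨r, hr, rfl⟩ | hr
  · exact ⟨r, hr, t - D, dist_map_line_of_translation hg hgA r t ▸ hrt⟩
  · exact ⟨r, hr, t, hrt⟩

theorem SlimTriangles.two_mul_infDist_sub_le_dist_of_translation (hslim : SlimTriangles X δ)
    (hgeo : GeodesicSpace X) (hA : Isometry A) (hg : Isometry g)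
    (hgA : Function.Semiconj A (· + D) g) (hD : 0 < D) (hδD : 2 * δ ≤ D) (x : X) :
    2 * infDist x (Set.range A) - 6 * δ ≤ dist x (g x) := by
  have hL : ∀ t, infDist x (Set.range A) ≤ dist x (A t) :=
    fun t => infDist_le_dist_of_mem (Set.mem_range_self t)
  obtain ⟨σ, hσ⟩ := hgeo x (g x)
  obtain ⟨r, hr, t, hrt⟩ :=
    hslim.exists_mem_dist_le_three_mul_of_translation hgeo hA hg hgA hD hδD hσ
  have detour := hσ.dist_add_dist_le_of_near hr hrt
  rw [dist_comm (A t), dist_map_line_of_translation hg hgA] at detour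
  linarith [hL t, hL (t - D)]

end Translation

theorem far_points_moved_far
    (δ ε : ℝ) (hδ : 0 < δ) (hε : 0 < ε)
    (X : Type*) [MetricSpace X]
    (hgeo : GeodesicSpace X) (hslim : SlimTriangles X δ)
    (h : X → X) (hiso : Isometry h)
    (A : ℝ → X) (hA : Isometry A)
    (ℓ : ℝ) (hℓ : ε ≤ ℓ) (htrans : ∀ t : ℝ, h (A t) = A (t + ℓ))
    (x : X) (L : ℝ) (hL : L = infDist x (Set.range A)) (hL3 : 3 * δ ≤ L) :
    2 * L - 6 * δ ≤ dist x (h^[⌈2 * δ / ε⌉₊] x) := by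
  have hD : 2 * δ ≤ ⌈2 * δ / ε⌉₊ • ℓ := by
    calc 2 * δ ≤ ⌈2 * δ / ε⌉₊ * ε := (div_le_iff₀ hε).1 (Nat.le_ceil _)
      _ ≤ ⌈2 * δ / ε⌉₊ * ℓ := by gcongr
      _ = ⌈2 * δ / ε⌉₊ • ℓ := (nsmul_eq_mul _ _).symm
  have hsemiconj : Function.Semiconj A (· + ⌈2 * δ / ε⌉₊ • ℓ) h^[⌈2 * δ / ε⌉₊] := by
    have hstep : Function.Semiconj A (· + ℓ) h := fun t => (htrans t).symm
    simpa only [add_right_iterate] using hstep.iterate_right ⌈2 * δ / ε⌉₊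
  rw [hL]
  exact hslim.two_mul_infDist_sub_le_dist_of_translation hgeo hA (isometry_iterate hiso _) hsemiconj
    (by linarith) hD x
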